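/- Suppose the feasible allocation x satisfies the Nashian Greedy condition and the valuations have unit monopolist utilities. Let p ∈ [−1, 1] with p ≠ 0, and let x* be any feasible allocation with U*_a = ∫_0^T v a s · x*_a s ds > 0 for every agent a. Then ((1/n) ∑_a (U a T)^p)^{1/p} ≥ ((1/n) ∑_a (U*_a)^p)^{1/p} / (2 · (n+1)^{|p|} · log(n+1)). -/

import Mathlib

open MeasureTheory Real

/-!
At almost every time the greedy rule serves only agents maximizing `v a s / U a s`, so the growth
rate `∑ a, v a s * x a s / U a s` of `∑ a, log (U a)` equals that maximum. As `U a` is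
nondecreasing, a competing allocation `y` satisfies
`∑ a, v a s * y a s / U a T ≤ ∑ a, v a s * y a s / U a s ≤ ∑ a, v a s * x a s / U a s`.
If no `U a` can exceed `κ` times its base, integration over `[0, T]` shows that the ratios
`(∫ v a * y a) / U a T` have average at most `log κ`.

The quotient of the `p`-means of `y` and `u` is the `p`-mean of the ratios `y a / u a` with weights
proportional to `u a ^ p`. For `p ≤ 1` it is at most the arithmetic mean with these weights, and if
all `u a` lie within a factor `κ` of each other, the weights are within a factor `κ ^ |p|` of being
uniform.
-/

lemma rpow_arith_mean_le_arith_mean_rpow_of_neg {ι : Type*} {s : Finset ι} {w z : ι → ℝ} {p : ℝ}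
    (hw : ∀ i ∈ s, 0 ≤ w i) (hw_sum : ∑ i ∈ s, w i = 1) (hz : ∀ i ∈ s, 0 < z i) (hp : p < 0) :
    (∑ i ∈ s, w i * z i) ^ p ≤ ∑ i ∈ s, w i * z i ^ p := by
  have zp_nonneg : ∀ i ∈ s, 0 ≤ z i ^ p := fun i hi ↦ rpow_nonneg (hz i hi).le p
  calc (∑ i ∈ s, w i * z i) ^ p
      ≤ (∏ i ∈ s, z i ^ w i) ^ p :=
        rpow_le_rpow_of_nonpos (Finset.prod_pos fun i hi ↦ rpow_pos_of_pos (hz i hi) _)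
          (geom_mean_le_arith_mean_weighted s w z hw hw_sum fun i hi ↦ (hz i hi).le) hp.le
    _ = ∏ i ∈ s, (z i ^ p) ^ w i := by
        rw [← finsetProd_rpow _ _ fun i hi ↦ rpow_nonneg (hz i hi).le _]
        refine Finset.prod_congr rfl fun i hi ↦ ?_
        rw [← rpow_mul (hz i hi).le, mul_comm, rpow_mul (hz i hi).le]
    _ ≤ ∑ i ∈ s, w i * z i ^ p := geom_mean_le_arith_mean_weighted s w _ hw hw_sum zp_nonneg

lemma rpow_mean_le_arith_mean_of_le_one {ι : Type*} {s : Finset ι} {w z : ι → ℝ} {p : ℝ}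
    (hw : ∀ i ∈ s, 0 ≤ w i) (hw_sum : ∑ i ∈ s, w i = 1) (hz : ∀ i ∈ s, 0 < z i)
    (hp : p ≤ 1) (hp0 : p ≠ 0) :
    (∑ i ∈ s, w i * z i ^ p) ^ (1 / p) ≤ ∑ i ∈ s, w i * z i := by
  have mean_pos : ∀ {f : ι → ℝ}, (∀ i ∈ s, 0 < f i) → 0 < ∑ i ∈ s, w i * f i := fun {f} hf ↦
    (Finset.prod_pos fun i hi ↦ rpow_pos_of_pos (hf i hi) (w i)).trans_le
      (geom_mean_le_arith_mean_weighted s w f hw hw_sum fun i hi ↦ (hf i hi).le)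
  have arith_pos := mean_pos hz
  have rpow_mean_pos := mean_pos fun i hi ↦ rpow_pos_of_pos (hz i hi) p
  rw [one_div]
  rcases hp0.lt_or_gt with hneg | hpos
  · exact (rpow_inv_le_iff_of_neg rpow_mean_pos arith_pos hneg).2
      (rpow_arith_mean_le_arith_mean_rpow_of_neg hw hw_sum hz hneg)
  · exact (rpow_inv_le_iff_of_pos rpow_mean_pos.le arith_pos.le hpos).2
      ((concaveOn_rpow hpos.le hp).le_map_sum hw hw_sum fun i hi ↦ (hz i hi).le)

lemma rpow_le_rpow_abs_mul_rpow {x y K p : ℝ} (hx : 0 < x) (hy : 0 < y)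
    (hxy : x ≤ K * y) (hyx : y ≤ K * x) : x ^ p ≤ K ^ |p| * y ^ p := by
  have hK : 0 < K := pos_of_mul_pos_left (hx.trans_le hxy) hy.le
  rcases le_or_gt 0 p with hp | hp
  · rw [abs_of_nonneg hp, ← mul_rpow hK.le hy.le]
    exact rpow_le_rpow hx.le hxy hp
  · calc x ^ p = K ^ |p| * (K * x) ^ p := by
          rw [abs_of_neg hp, mul_rpow hK.le hx.le, ← mul_assoc, ← rpow_add hK, neg_add_cancel,
            rpow_zero, one_mul]
      _ ≤ K ^ |p| * y ^ p :=
          mul_le_mul_of_nonneg_left (rpow_le_rpow_of_nonpos hy hyx hp.le) (rpow_nonneg hK.le _)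

section PowerMean

variable {ι : Type*} [Fintype ι] {p M : ℝ} {u y w r : ι → ℝ}

/-- The unweighted `p`-mean of a finite family, meant for `p ≠ 0` and positive entries. -/
noncomputable def powerMean (p : ℝ) (u : ι → ℝ) : ℝ :=
  ((1 / (Fintype.card ι : ℝ)) * ∑ a, u a ^ p) ^ (1 / p)

lemma powerMean_nonneg (hu : ∀ a, 0 ≤ u a) : 0 ≤ powerMean p u :=
  rpow_nonneg (mul_nonneg (by positivity) (Finset.sum_nonneg fun a _ ↦ rpow_nonneg (hu a) p)) _

lemma weighted_mean_le_mul_mean [Nonempty ι] (hw : ∀ a, 0 < w a) (hr : ∀ a, 0 ≤ r a)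
    (hM : ∀ a b, w a ≤ M * w b) :
    ∑ a, w a / (∑ b, w b) * r a ≤ M * ((∑ a, r a) / Fintype.card ι) := by
  have sum_pos : 0 < ∑ b, w b := Finset.sum_pos (fun b _ ↦ hw b) Finset.univ_nonempty
  have weight_le : ∀ a, w a / (∑ b, w b) ≤ M / Fintype.card ι := fun a ↦ by
    rw [div_le_div_iff₀ sum_pos (by positivity), mul_comm, ← nsmul_eq_mul, Finset.mul_sum]
    exact Finset.card_nsmul_le_sum _ _ _ fun b _ ↦ hM a b
  calc ∑ a, w a / (∑ b, w b) * r a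
      ≤ ∑ a, M / Fintype.card ι * r a :=
        Finset.sum_le_sum fun a _ ↦ mul_le_mul_of_nonneg_right (weight_le a) (hr a)
    _ = M * ((∑ a, r a) / Fintype.card ι) := by rw [← Finset.mul_sum]; ring

lemma powerMean_le_weighted_mean_div_mul [Nonempty ι] (hu : ∀ a, 0 < u a) (hy : ∀ a, 0 < y a)
    (hp : p ≤ 1) (hp0 : p ≠ 0) :
    powerMean p y ≤ (∑ a, u a ^ p / (∑ b, u b ^ p) * (y a / u a)) * powerMean p u := by
  have up_pos : ∀ a, 0 < u a ^ p := fun a ↦ rpow_pos_of_pos (hu a) p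
  have sum_pos : 0 < ∑ b, u b ^ p := Finset.sum_pos (fun b _ ↦ up_pos b) Finset.univ_nonempty
  have weight_nonneg : ∀ a, 0 ≤ u a ^ p / (∑ b, u b ^ p) := fun a ↦
    div_nonneg (up_pos a).le sum_pos.le
  have ratio_pos : ∀ a, 0 < y a / u a := fun a ↦ div_pos (hy a) (hu a)
  have mean_eq : (1 / (Fintype.card ι : ℝ)) * ∑ a, y a ^ p =
      (∑ a, u a ^ p / (∑ b, u b ^ p) * (y a / u a) ^ p) *
        ((1 / (Fintype.card ι : ℝ)) * ∑ b, u b ^ p) := by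
    rw [mul_left_comm, Finset.sum_mul]
    congr! 2 with a
    rw [div_rpow (hy a).le (hu a).le, div_mul_div_comm, mul_comm (u a ^ p),
      mul_div_mul_right _ _ (up_pos a).ne', div_mul_cancel₀ _ sum_pos.ne']
  rw [powerMean, mean_eq, mul_rpow
    (Finset.sum_nonneg fun a _ ↦ mul_nonneg (weight_nonneg a) (rpow_nonneg (ratio_pos a).le p))
    (by positivity)]
  refine mul_le_mul_of_nonneg_right ?_ (powerMean_nonneg fun a ↦ (hu a).le)
  exact rpow_mean_le_arith_mean_of_le_one (fun a _ ↦ weight_nonneg a)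
    (by rw [← Finset.sum_div, div_self sum_pos.ne']) (fun a _ ↦ ratio_pos a) hp hp0

lemma powerMean_le_mul_mean_div_mul [Nonempty ι] (hu : ∀ a, 0 < u a) (hy : ∀ a, 0 < y a)
    (hp : p ≤ 1) (hp0 : p ≠ 0) (hM : ∀ a b, u a ^ p ≤ M * u b ^ p) :
    powerMean p y ≤ M * ((∑ a, y a / u a) / Fintype.card ι) * powerMean p u :=
  (powerMean_le_weighted_mean_div_mul hu hy hp hp0).trans <|
    mul_le_mul_of_nonneg_right
      (weighted_mean_le_mul_mean (fun a ↦ rpow_pos_of_pos (hu a) p)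
        (fun a ↦ (div_pos (hy a) (hu a)).le) hM)
      (powerMean_nonneg fun a ↦ (hu a).le)

end PowerMean

lemma sum_mul_le_sum_mul_of_supported_on_max {ι : Type*} [Fintype ι] {x y g : ι → ℝ}
    (hx : ∀ a, 0 ≤ x a) (hx_sum : ∑ a, x a = 1) (hmax : ∀ a b, 0 < x a → g b ≤ g a)
    (hy : ∀ a, 0 ≤ y a) (hy_sum : ∑ a, y a ≤ 1) (hg : ∀ a, 0 ≤ g a) :
    ∑ a, y a * g a ≤ ∑ a, x a * g a := by
  have le_mean : ∀ b, g b ≤ ∑ a, x a * g a := fun b ↦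
    calc g b = ∑ a, x a * g b := by rw [← Finset.sum_mul, hx_sum, one_mul]
      _ ≤ ∑ a, x a * g a := Finset.sum_le_sum fun a _ ↦ by
        rcases (hx a).eq_or_lt with h | h
        · simp only [← h, zero_mul, le_refl]
        · exact mul_le_mul_of_nonneg_left (hmax a b h) h.le
  calc ∑ a, y a * g a ≤ ∑ a, y a * ∑ b, x b * g b :=
        Finset.sum_le_sum fun a _ ↦ mul_le_mul_of_nonneg_left (le_mean a) (hy a)
    _ = (∑ a, y a) * ∑ b, x b * g b := by rw [Finset.sum_mul]
    _ ≤ ∑ b, x b * g b :=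
        mul_le_of_le_one_left (Finset.sum_nonneg fun b _ ↦ mul_nonneg (hx b) (hg b)) hy_sum

section Primitive

variable {f g G : ℝ → ℝ} {a b c : ℝ}

lemma intervalIntegrable_of_monotoneOn_of_ae_hasDerivAt (hab : a ≤ b)
    (hG : MonotoneOn G (Set.Icc a b))
    (hderiv : ∀ᵐ t, t ∈ Set.Icc a b → HasDerivAt G (g t) t) :
    IntervalIntegrable g volume a b := by
  rw [← Set.uIcc_of_le hab] at hG hderiv
  refine hG.intervalIntegrable_deriv.congr_ae ((ae_restrict_iff' measurableSet_uIoc).2 ?_)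
  filter_upwards [hderiv] with t ht hmem using (ht (Set.uIoc_subset_uIcc hmem)).deriv

lemma integral_le_sub_of_monotoneOn_of_ae_hasDerivAt (hab : a ≤ b)
    (hG : MonotoneOn G (Set.Icc a b))
    (hderiv : ∀ᵐ t, t ∈ Set.Icc a b → HasDerivAt G (g t) t) :
    ∫ t in a..b, g t ≤ G b - G a := by
  have increment_nonneg : 0 ≤ G b - G a :=
    sub_nonneg.2 (hG (Set.left_mem_Icc.2 hab) (Set.right_mem_Icc.2 hab) hab)
  rw [← Set.uIcc_of_le hab] at hG hderiv
  have deriv_eq : ∀ᵐ t, t ∈ Set.uIoc a b → deriv G t = g t := by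
    filter_upwards [hderiv] with t ht hmem using (ht (Set.uIoc_subset_uIcc hmem)).deriv
  have deriv_mem := hG.intervalIntegral_deriv_mem_uIcc
  rw [Set.uIcc_of_le increment_nonneg, intervalIntegral.integral_congr_ae deriv_eq] at deriv_mem
  exact deriv_mem.2

lemma monotoneOn_const_add_integral (hf : IntervalIntegrable f volume a b)
    (hf_nonneg : ∀ᵐ s ∂volume.restrict (Set.Icc a b), 0 ≤ f s) :
    MonotoneOn (fun t ↦ c + ∫ s in a..t, f s) (Set.Icc a b) := by
  intro s hs t ht hst
  refine add_le_add_right (intervalIntegral.integral_mono_interval le_rfl hs.1 hst ?_ ?_) c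
  · exact ae_restrict_of_ae_restrict_of_subset
      (Set.Ioc_subset_Icc_self.trans (Set.Icc_subset_Icc_right ht.2)) hf_nonneg
  · refine hf.mono_set (Set.uIcc_subset_uIcc_left ?_)
    exact Set.mem_uIcc_of_le ht.1 ht.2

lemma le_const_add_integral (hf_nonneg : ∀ᵐ s ∂volume.restrict (Set.Icc a b), 0 ≤ f s) {t : ℝ}
    (ht : t ∈ Set.Icc a b) : c ≤ c + ∫ s in a..t, f s :=
  le_add_of_nonneg_right <| intervalIntegral.integral_nonneg_of_ae_restrict ht.1 <|
    ae_restrict_of_ae_restrict_of_subset (Set.Icc_subset_Icc_right ht.2) hf_nonneg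

lemma monotoneOn_log_const_add_integral (hc : 0 < c) (hf : IntervalIntegrable f volume a b)
    (hf_nonneg : ∀ᵐ s ∂volume.restrict (Set.Icc a b), 0 ≤ f s) :
    MonotoneOn (fun t ↦ log (c + ∫ s in a..t, f s)) (Set.Icc a b) := fun _ hs _ ht hst ↦
  log_le_log (hc.trans_le (le_const_add_integral hf_nonneg hs))
    (monotoneOn_const_add_integral hf hf_nonneg hs ht hst)

lemma ae_hasDerivAt_log_const_add_integral (hab : a ≤ b) (hc : 0 < c)
    (hf : IntervalIntegrable f volume a b)
    (hf_nonneg : ∀ᵐ s ∂volume.restrict (Set.Icc a b), 0 ≤ f s) :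
    ∀ᵐ t, t ∈ Set.Icc a b →
      HasDerivAt (fun t ↦ log (c + ∫ s in a..t, f s)) (f t / (c + ∫ s in a..t, f s)) t := by
  filter_upwards [hf.ae_hasDerivAt_integral] with t hderiv ht
  have integral_hasDerivAt := hderiv (Set.uIcc_of_le hab ▸ ht) a Set.left_mem_uIcc
  exact (integral_hasDerivAt.const_add c).log
    (hc.trans_le (le_const_add_integral hf_nonneg ht)).ne'

lemma intervalIntegrable_div_const_add_integral (hab : a ≤ b) (hc : 0 < c)
    (hf : IntervalIntegrable f volume a b)
    (hf_nonneg : ∀ᵐ s ∂volume.restrict (Set.Icc a b), 0 ≤ f s) :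
    IntervalIntegrable (fun t ↦ f t / (c + ∫ s in a..t, f s)) volume a b :=
  intervalIntegrable_of_monotoneOn_of_ae_hasDerivAt hab
    (monotoneOn_log_const_add_integral hc hf hf_nonneg)
    (ae_hasDerivAt_log_const_add_integral hab hc hf hf_nonneg)

lemma integral_div_const_add_integral_le (hab : a ≤ b) (hc : 0 < c)
    (hf : IntervalIntegrable f volume a b)
    (hf_nonneg : ∀ᵐ s ∂volume.restrict (Set.Icc a b), 0 ≤ f s) :
    ∫ t in a..b, f t / (c + ∫ s in a..t, f s) ≤ log ((c + ∫ s in a..b, f s) / c) := by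
  have end_pos := hc.trans_le (le_const_add_integral hf_nonneg (Set.right_mem_Icc.2 hab))
  rw [log_div end_pos.ne' hc.ne']
  simpa only [intervalIntegral.integral_same, add_zero] using
    integral_le_sub_of_monotoneOn_of_ae_hasDerivAt hab
      (monotoneOn_log_const_add_integral hc hf hf_nonneg)
      (ae_hasDerivAt_log_const_add_integral hab hc hf hf_nonneg)

end Primitive

/-- An integrable nonnegative rate of value for one agent on the time interval `[0, T]`. -/
structure IsValuation (T : ℝ) (f : ℝ → ℝ) : Prop where
  ae_nonneg : ∀ᵐ s ∂volume.restrict (Set.Icc 0 T), 0 ≤ f s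
  integrableOn : IntegrableOn f (Set.Icc 0 T)

namespace IsValuation

variable {T : ℝ} {f w : ℝ → ℝ}

lemma intervalIntegrable (hT : 0 ≤ T) (hf : IsValuation T f) : IntervalIntegrable f volume 0 T :=
  (intervalIntegrable_iff_integrableOn_Icc_of_le hT).2 hf.integrableOn

lemma mul_of_ae_mem_Icc (hf : IsValuation T f)
    (hw : AEStronglyMeasurable w (volume.restrict (Set.Icc 0 T)))
    (hw_mem : ∀ᵐ s ∂volume.restrict (Set.Icc 0 T), w s ∈ Set.Icc 0 1) :
    IsValuation T fun s ↦ f s * w s where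
  ae_nonneg := by
    filter_upwards [hf.ae_nonneg, hw_mem] with s hfs hws using mul_nonneg hfs hws.1
  integrableOn := Integrable.mul_bdd (c := 1) hf.integrableOn hw <| by
    filter_upwards [hw_mem] with s hws using (norm_of_nonneg hws.1).trans_le hws.2

end IsValuation

section Allocation

variable {ι : Type*} {T c κ p : ℝ} {v x y : ι → ℝ → ℝ}

/-- The utility accumulated by agent `a` up to time `t`, starting from the base value `c`. -/
noncomputable def baseUtility (c : ℝ) (v x : ι → ℝ → ℝ) (a : ι) (t : ℝ) : ℝ :=
  c + ∫ s in (0 : ℝ)..t, v a s * x a s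

variable [Fintype ι]

/-- A division of one unit of a divisible good among the agents at every time in `[0, T]`: agent `a`
receives the fraction `x a s` at time `s`, and part of the good may be left unallocated. -/
structure IsFeasible (T : ℝ) (x : ι → ℝ → ℝ) : Prop where
  measurable : ∀ a, Measurable (x a)
  ae_nonneg_and_sum_le_one : ∀ᵐ s ∂volume.restrict (Set.Icc 0 T),
    (∀ a, 0 ≤ x a s) ∧ ∑ a, x a s ≤ 1

/-- The Nashian Greedy condition: the whole good goes to agents with the largest ratio of current
value to base-`c` utility. The comparison of ratios is cross-multiplied. -/
def IsNashianGreedy (T c : ℝ) (v x : ι → ℝ → ℝ) : Prop :=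
  ∀ᵐ s ∂volume.restrict (Set.Icc 0 T), (∑ a, x a s = 1) ∧
    ∀ a b, 0 < x a s → v b s * baseUtility c v x a s ≤ v a s * baseUtility c v x b s

namespace IsFeasible

lemma ae_mem_Icc (hx : IsFeasible T x) (a : ι) :
    ∀ᵐ s ∂volume.restrict (Set.Icc 0 T), x a s ∈ Set.Icc 0 1 := by
  filter_upwards [hx.ae_nonneg_and_sum_le_one] with s hs
  exact ⟨hs.1 a, (Finset.single_le_sum (fun b _ ↦ hs.1 b) (Finset.mem_univ a)).trans hs.2⟩

lemma isValuation_mul (hx : IsFeasible T x) {a : ι} (hv : IsValuation T (v a)) :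
    IsValuation T fun s ↦ v a s * x a s :=
  hv.mul_of_ae_mem_Icc (hx.measurable a).aestronglyMeasurable (hx.ae_mem_Icc a)

lemma monotoneOn_baseUtility (hT : 0 ≤ T) (hx : IsFeasible T x) {a : ι}
    (hv : IsValuation T (v a)) : MonotoneOn (baseUtility c v x a) (Set.Icc 0 T) :=
  monotoneOn_const_add_integral ((hx.isValuation_mul hv).intervalIntegrable hT)
    (hx.isValuation_mul hv).ae_nonneg

lemma le_baseUtility (hx : IsFeasible T x) {a : ι} (hv : IsValuation T (v a)) {t : ℝ}
    (ht : t ∈ Set.Icc 0 T) : c ≤ baseUtility c v x a t :=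
  le_const_add_integral (hx.isValuation_mul hv).ae_nonneg ht

lemma baseUtility_le (hT : 0 ≤ T) (hx : IsFeasible T x) {a : ι} (hv : IsValuation T (v a)) :
    baseUtility c v x a T ≤ c + ∫ s in (0 : ℝ)..T, v a s := by
  refine add_le_add_right (intervalIntegral.integral_mono_ae_restrict hT
    ((hx.isValuation_mul hv).intervalIntegrable hT) (hv.intervalIntegrable hT) ?_) c
  filter_upwards [hv.ae_nonneg, hx.ae_mem_Icc a] with s hvs hxs
    using mul_le_of_le_one_right hvs hxs.2

end IsFeasible

namespace IsNashianGreedy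

lemma ae_sum_div_final_utility_le (hT : 0 ≤ T) (hc : 0 < c) (hv : ∀ a, IsValuation T (v a))
    (hx : IsFeasible T x) (hgreedy : IsNashianGreedy T c v x) (hy : IsFeasible T y) :
    ∀ᵐ s ∂volume.restrict (Set.Icc 0 T),
      ∑ a, v a s * y a s / baseUtility c v x a T ≤ ∑ a, v a s * x a s / baseUtility c v x a s := by
  filter_upwards [hgreedy, hx.ae_nonneg_and_sum_le_one, hy.ae_nonneg_and_sum_le_one,
    ae_all_iff.2 fun a ↦ (hv a).ae_nonneg, ae_restrict_mem measurableSet_Icc]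
    with s ⟨hx_sum, hmax⟩ ⟨hx_nonneg, _⟩ ⟨hy_nonneg, hy_sum⟩ hvs hs
  have utility_pos : ∀ a, 0 < baseUtility c v x a s := fun a ↦
    hc.trans_le (hx.le_baseUtility (hv a) hs)
  have utility_le_final : ∀ a, baseUtility c v x a s ≤ baseUtility c v x a T := fun a ↦
    hx.monotoneOn_baseUtility hT (hv a) hs (Set.right_mem_Icc.2 hT) hs.2
  calc ∑ a, v a s * y a s / baseUtility c v x a T
      ≤ ∑ a, v a s * y a s / baseUtility c v x a s := Finset.sum_le_sum fun a _ ↦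
        div_le_div_of_nonneg_left (mul_nonneg (hvs a) (hy_nonneg a)) (utility_pos a)
          (utility_le_final a)
    _ = ∑ a, y a s * (v a s / baseUtility c v x a s) :=
        Finset.sum_congr rfl fun a _ ↦ by ring
    _ ≤ ∑ a, x a s * (v a s / baseUtility c v x a s) :=
        sum_mul_le_sum_mul_of_supported_on_max hx_nonneg hx_sum
          (fun a b hab ↦ (div_le_div_iff₀ (utility_pos b) (utility_pos a)).2 (hmax a b hab))
          hy_nonneg hy_sum fun a ↦ div_nonneg (hvs a) (utility_pos a).le
    _ = ∑ a, v a s * x a s / baseUtility c v x a s :=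
        Finset.sum_congr rfl fun a _ ↦ by ring

lemma sum_utility_div_final_utility_le (hT : 0 ≤ T) (hc : 0 < c) (hv : ∀ a, IsValuation T (v a))
    (hx : IsFeasible T x) (hgreedy : IsNashianGreedy T c v x) (hy : IsFeasible T y) :
    ∑ a, (∫ s in (0 : ℝ)..T, v a s * y a s) / baseUtility c v x a T ≤
      ∑ a, log (baseUtility c v x a T / c) := by
  have x_rate := fun a ↦ hx.isValuation_mul (hv a)
  have y_integrable : ∀ a ∈ Finset.univ, IntervalIntegrable
      (fun s ↦ v a s * y a s / baseUtility c v x a T) volume 0 T := fun a _ ↦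
    ((hy.isValuation_mul (hv a)).intervalIntegrable hT).div_const _
  have x_integrable : ∀ a ∈ Finset.univ, IntervalIntegrable
      (fun s ↦ v a s * x a s / baseUtility c v x a s) volume 0 T := fun a _ ↦
    intervalIntegrable_div_const_add_integral hT hc ((x_rate a).intervalIntegrable hT)
      (x_rate a).ae_nonneg
  calc ∑ a, (∫ s in (0 : ℝ)..T, v a s * y a s) / baseUtility c v x a T
      = ∫ s in (0 : ℝ)..T, ∑ a, v a s * y a s / baseUtility c v x a T := by
        simp only [intervalIntegral.integral_finsetSum y_integrable, intervalIntegral.integral_div]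
    _ ≤ ∫ s in (0 : ℝ)..T, ∑ a, v a s * x a s / baseUtility c v x a s :=
        intervalIntegral.integral_mono_ae_restrict hT
          (by simpa only [Finset.sum_fn] using IntervalIntegrable.sum Finset.univ y_integrable)
          (by simpa only [Finset.sum_fn] using IntervalIntegrable.sum Finset.univ x_integrable)
          (hgreedy.ae_sum_div_final_utility_le hT hc hv hx hy)
    _ = ∑ a, ∫ s in (0 : ℝ)..T, v a s * x a s / baseUtility c v x a s :=
        intervalIntegral.integral_finsetSum x_integrable
    _ ≤ ∑ a, log (baseUtility c v x a T / c) := Finset.sum_le_sum fun a _ ↦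
        integral_div_const_add_integral_le hT hc ((x_rate a).intervalIntegrable hT)
          (x_rate a).ae_nonneg

lemma mean_utility_div_final_utility_le [Nonempty ι] (hT : 0 ≤ T) (hc : 0 < c)
    (hv : ∀ a, IsValuation T (v a)) (hκ : ∀ a, c + ∫ s in (0 : ℝ)..T, v a s ≤ κ * c)
    (hx : IsFeasible T x) (hgreedy : IsNashianGreedy T c v x) (hy : IsFeasible T y) :
    (∑ a, (∫ s in (0 : ℝ)..T, v a s * y a s) / baseUtility c v x a T) / Fintype.card ι ≤
      log κ := by
  have growth_pos : ∀ a, 0 < baseUtility c v x a T / c := fun a ↦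
    div_pos (hc.trans_le (hx.le_baseUtility (hv a) (Set.right_mem_Icc.2 hT))) hc
  have growth_le : ∀ a, baseUtility c v x a T / c ≤ κ := fun a ↦
    (div_le_iff₀ hc).2 ((hx.baseUtility_le hT (hv a)).trans (hκ a))
  rw [div_le_iff₀' (by positivity), ← nsmul_eq_mul]
  exact (hgreedy.sum_utility_div_final_utility_le hT hc hv hx hy).trans <|
    Finset.sum_le_card_nsmul _ _ _ fun a _ ↦ log_le_log (growth_pos a) (growth_le a)

end IsNashianGreedy

theorem stmt_2_general [Nonempty ι] (hT : 0 ≤ T) (hc : 0 < c)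
    (hv : ∀ a, IsValuation T (v a)) (hκ : ∀ a, c + ∫ s in (0 : ℝ)..T, v a s ≤ κ * c)
    (hx : IsFeasible T x) (hgreedy : IsNashianGreedy T c v x) (hp : p ≤ 1) (hp0 : p ≠ 0)
    (hy : IsFeasible T y) (hy_pos : ∀ a, 0 < ∫ s in (0 : ℝ)..T, v a s * y a s) :
    powerMean p (fun a ↦ ∫ s in (0 : ℝ)..T, v a s * y a s) / (κ ^ |p| * log κ) ≤
      powerMean p (fun a ↦ baseUtility c v x a T) := by
  have le_utility : ∀ a, c ≤ baseUtility c v x a T := fun a ↦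
    hx.le_baseUtility (hv a) (Set.right_mem_Icc.2 hT)
  have utility_le : ∀ a, baseUtility c v x a T ≤ κ * c := fun a ↦
    (hx.baseUtility_le hT (hv a)).trans (hκ a)
  have utility_pos : ∀ a, 0 < baseUtility c v x a T := fun a ↦ hc.trans_le (le_utility a)
  have one_le_κ : 1 ≤ κ :=
    let ⟨a⟩ := ‹Nonempty ι›
    (le_mul_iff_one_le_left hc).1 ((le_utility a).trans (utility_le a))
  have utility_le_mul : ∀ a b, baseUtility c v x a T ≤ κ * baseUtility c v x b T := fun a b ↦
    (utility_le a).trans (mul_le_mul_of_nonneg_left (le_utility b) (zero_le_one.trans one_le_κ))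
  have rpow_comparable : ∀ a b,
      baseUtility c v x a T ^ p ≤ κ ^ |p| * baseUtility c v x b T ^ p := fun a b ↦
    rpow_le_rpow_abs_mul_rpow (utility_pos a) (utility_pos b) (utility_le_mul a b)
      (utility_le_mul b a)
  have mean_nonneg := powerMean_nonneg (p := p) fun a ↦ (utility_pos a).le
  have log_nonneg : 0 ≤ log κ := log_nonneg one_le_κ
  refine div_le_of_le_mul₀ (by positivity) mean_nonneg ?_
  rw [mul_comm (powerMean _ _)]
  grw [powerMean_le_mul_mean_div_mul utility_pos hy_pos hp hp0 rpow_comparable,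
    hgreedy.mean_utility_div_final_utility_le hT hc hv hκ hx hy]

end Allocation

theorem stmt_2
    (n : ℕ) (hn : 1 ≤ n) (T : ℝ) (hT : 0 < T)
    (v : Fin n → ℝ → ℝ)
    (hv_meas : ∀ a, Measurable (v a))
    (hv_nonneg : ∀ a, ∀ᵐ s ∂(volume.restrict (Set.Icc (0:ℝ) T)), 0 ≤ v a s)
    (hv_int : ∀ a, IntegrableOn (v a) (Set.Icc (0:ℝ) T))
    (hv_unit : ∀ a, ∫ s in (0:ℝ)..T, v a s = 1)
    (x : Fin n → ℝ → ℝ)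
    (hx_meas : ∀ a, Measurable (x a))
    (hx_feas : ∀ᵐ s ∂(volume.restrict (Set.Icc (0:ℝ) T)),
      (∀ a, 0 ≤ x a s) ∧ ∑ a, x a s ≤ 1)
    (U : Fin n → ℝ → ℝ)
    (hU : ∀ a t, U a t = 1 / (n : ℝ) + ∫ s in (0:ℝ)..t, v a s * x a s)
    (hgreedy : ∀ᵐ s ∂(volume.restrict (Set.Icc (0:ℝ) T)),
      (∑ a, x a s = 1) ∧
      ∀ a b, 0 < x a s → v a s * U b s ≥ v b s * U a s)
    (p : ℝ) (hp_lb : -1 ≤ p) (hp_ub : p ≤ 1) (hp0 : p ≠ 0)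
    (xstar : Fin n → ℝ → ℝ)
    (hxstar_meas : ∀ a, Measurable (xstar a))
    (hxstar_feas : ∀ᵐ s ∂(volume.restrict (Set.Icc (0:ℝ) T)),
      (∀ a, 0 ≤ xstar a s) ∧ ∑ a, xstar a s ≤ 1)
    (Ustar : Fin n → ℝ)
    (hUstar : ∀ a, Ustar a = ∫ s in (0:ℝ)..T, v a s * xstar a s)
    (hUstar_pos : ∀ a, 0 < Ustar a) :
    ((1 / (n : ℝ)) * ∑ a, (U a T) ^ p) ^ (1 / p) ≥
      ((1 / (n : ℝ)) * ∑ a, (Ustar a) ^ p) ^ (1 / p) /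
        (2 * ((n : ℝ) + 1) ^ |p| * Real.log ((n : ℝ) + 1)) := by
  have : Nonempty (Fin n) := ⟨⟨0, hn⟩⟩
  obtain rfl : U = baseUtility (1 / n) v x := funext₂ hU
  obtain rfl : Ustar = fun a ↦ ∫ s in (0 : ℝ)..T, v a s * xstar a s := funext hUstar
  have mean_le := stmt_2_general (κ := n + 1) hT.le (by positivity)
    (fun a ↦ ⟨hv_nonneg a, hv_int a⟩) (fun a ↦ by rw [hv_unit a]; field_simp; linarith)
    ⟨hx_meas, hx_feas⟩ hgreedy hp_ub hp0 ⟨hxstar_meas, hxstar_feas⟩ hUstar_pos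
  have mean_nonneg := powerMean_nonneg (p := p) fun a ↦ (hUstar_pos a).le
  have log_pos : 0 < log ((n : ℝ) + 1) := log_pos (lt_add_of_pos_left 1 (Nat.cast_pos.2 hn))
  have constant_pos : 0 < ((n : ℝ) + 1) ^ |p| * log ((n : ℝ) + 1) := by positivity
  simp only [powerMean, Fintype.card_fin] at mean_le mean_nonneg
  exact (div_le_div_of_nonneg_left mean_nonneg constant_pos (by linarith)).trans mean_le
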